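/- arXiv:1207.4331 — 4 statements merged into one kernel-verified Lean document; each statement's English description precedes it below -/
import Mathlib

section
/- Let (a_n)_{n\ge 0} be a sequence of real numbers. For n \ge 1 define the polynomial p_n(x) as the determinant of the (n+1)\times(n+1) matrix whose (i,j)-entry is a_{i+j-2} for 1 \le j \le n and whose last column is (1, x, x^2, \dots, x^n)^T (i.e. the (i,n+1)-entry is x^{i-1}), and set p_0 = 1. Define q_n(x) = \sum_{j=0}^n a_j \binom{n}{j} (-x)^{n-j}. Then for all integers n, m \ge 1 and all real x: det( p_{m+j-1}^{(i-1)}(x) )_{i,j=1}^n = (-1)^{nm} \left( \prod_{k=1}^{n-1} k! \cdot \det( a_{i+j-2} )_{i,j=1}^{k+m} \right) \cdot \det( q_{n+i+j-2}(x) )_{i,j=1}^m, where p^{(i-1)} denotes the (i-1)-st derivative, and an empty product equals 1 and a 0\times 0 determinant equals 1. -/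
/-!
Up to factorials, the Wronskian at `x` is the determinant of the low coefficients of the Taylor
expansions of the `p_k` at `x`. Row operations on the determinant defining `p_k` replace every
monomial `X ^ i` by `(X - x) ^ i`, so these Taylor expansions are again bordered determinants, now
of the mixed moments `Λ ((X - x) ^ i * X ^ j)` of the functional `Λ` with moments `a`. This matrix
has the same leading minors as the Hankel matrix of `a`, and `q_k(x) = Λ ((X - x) ^ k)`.

It remains to find the low coefficients of bordered polynomials of an arbitrary matrix `A`. Since
the `k`-th one is orthogonal to the first `k` columns of `A`, multiplying a leading block of `Aᵀ` by
the coefficients of `n` consecutive polynomials gives a block triangular matrix, whose determinant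
is a product of leading minors and a minor of `A`.
-/

open Polynomial Matrix Finset

namespace LeclercWronskian

section CommRing

variable {R S : Type*} [CommRing R] [CommRing S]

/-- The leading principal minor of order `k` of an infinite matrix. For `A i j = a (i + j)` it is
the Hankel determinant of order `k` of the sequence `a`. -/
def leadingMinor (A : ℕ → ℕ → R) (k : ℕ) : R :=
  det (of fun i j : Fin k => A i j)

/-- The leading principal submatrix of order `k + 1` of `A`, with its last column replaced by
`v`. -/
def bordered (A : ℕ → ℕ → R) (v : ℕ → R) (k : ℕ) : Matrix (Fin (k + 1)) (Fin (k + 1)) R :=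
  of fun i j => if (j : ℕ) < k then A i j else v i

/-- The polynomial of degree at most `k` obtained by bordering `A` with the powers of `X`. For
`A i j = a (i + j)` it is the `k`-th orthogonal polynomial of the moment sequence `a`, scaled so
that its coefficient of `X ^ k` is the Hankel determinant of order `k`. -/
noncomputable def borderedPoly (A : ℕ → ℕ → R) (k : ℕ) : R[X] :=
  det (bordered (fun i j => C (A i j)) (fun i => X ^ i) k)

/-- The linear functional on polynomials whose moments are `a`. -/
noncomputable def momentFunctional (a : ℕ → R) : R[X] →ₗ[R] R :=
  (basisMonomials R).constr R a

theorem map_leadingMinor (f : R →+* S) (A : ℕ → ℕ → R) (k : ℕ) :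
    f (leadingMinor A k) = leadingMinor (fun i j => f (A i j)) k :=
  f.map_det _

theorem map_borderedPoly (f : R →+* S) (A : ℕ → ℕ → R) (k : ℕ) :
    (borderedPoly A k).map f = borderedPoly (fun i j => f (A i j)) k := by
  rw [borderedPoly, ← coe_mapRingHom, RingHom.map_det, borderedPoly]
  congr 1
  ext1 i j
  simp [bordered, apply_ite (Polynomial.map f)]

theorem eval_borderedPoly (A : ℕ → ℕ → R) (k : ℕ) (x : R) :
    (borderedPoly A k).eval x = det (bordered A (fun i => x ^ i) k) := by
  rw [borderedPoly, ← coe_evalRingHom, RingHom.map_det]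
  congr 1
  ext1 i j
  simp [bordered, apply_ite (eval x)]

theorem borderedPoly_zero (A : ℕ → ℕ → R) : borderedPoly A 0 = 1 := by
  simp [borderedPoly, bordered]

theorem det_bordered (A : ℕ → ℕ → R) (v : ℕ → R) (k : ℕ) :
    det (bordered A v k) = ∑ i : Fin (k + 1),
      v i * ((-1) ^ (i + k : ℕ) * det (of fun r c : Fin k => A (i.succAbove r) c)) := by
  rw [det_succ_column _ (Fin.last k)]
  refine sum_congr rfl fun i _ => ?_
  have hminor : (bordered A v k).submatrix i.succAbove (Fin.last k).succAbove =
      of fun r c : Fin k => A (i.succAbove r) c := by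
    ext r c
    simp [bordered]
  rw [hminor]
  simp only [bordered, of_apply, Fin.val_last, lt_irrefl, if_false]
  ring

theorem sum_mul_coeff_borderedPoly (A : ℕ → ℕ → R) (v : ℕ → R) {k N : ℕ} (hkN : k < N) :
    ∑ r ∈ range N, v r * (borderedPoly A k).coeff r = det (bordered A v k) := by
  have hpoly : borderedPoly A k = ∑ i : Fin (k + 1), monomial (i : ℕ)
      ((-1) ^ (i + k : ℕ) * det (of fun r c : Fin k => A (i.succAbove r) c)) := by
    rw [borderedPoly, det_bordered]
    refine sum_congr rfl fun i _ => ?_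
    rw [← C_mul_X_pow_eq_monomial, mul_comm, C_mul, C_pow, C_neg, C_1, RingHom.map_det]
    rfl
  simp_rw [hpoly, finsetSum_coeff, coeff_monomial, mul_sum, mul_ite, mul_zero]
  rw [sum_comm, det_bordered]
  refine sum_congr rfl fun i _ => ?_
  rw [sum_ite_eq, if_pos (mem_range.2 (by omega))]

theorem sum_mul_coeff_borderedPoly_of_lt (A : ℕ → ℕ → R) {s k N : ℕ} (hsk : s < k) (hkN : k < N) :
    ∑ r ∈ range N, A r s * (borderedPoly A k).coeff r = 0 := by
  rw [sum_mul_coeff_borderedPoly A (A · s) hkN]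
  refine det_zero_of_column_eq (i := ⟨s, by omega⟩) (j := Fin.last k)
    (by simp [Fin.ext_iff, hsk.ne]) fun i => ?_
  simp [bordered, hsk]

theorem sum_mul_coeff_borderedPoly_self (A : ℕ → ℕ → R) {k N : ℕ} (hkN : k < N) :
    ∑ r ∈ range N, A r k * (borderedPoly A k).coeff r = leadingMinor A (k + 1) := by
  rw [sum_mul_coeff_borderedPoly A (A · k) hkN, leadingMinor]
  congr 1
  ext i j
  obtain hj | hj := (Nat.lt_succ_iff.1 j.2).lt_or_eq <;> simp [bordered, hj]

theorem val_iterate_finRotate (N m : ℕ) (i : Fin N) :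
    ((finRotate N)^[m] i : ℕ) = (i + m) % N := by
  induction m with
  | zero => simp [Nat.mod_eq_of_lt i.2]
  | succ m ih =>
    obtain ⟨N, rfl⟩ := Nat.exists_eq_add_one.2 i.pos
    rw [Function.iterate_succ_apply', finRotate_apply, Fin.val_add, ih, Fin.val_one',
      ← Nat.add_mod, add_assoc]

theorem sign_finRotate_pow (n m : ℕ) :
    (finRotate (n + m) ^ m).sign = (-1) ^ (n * m) := by
  rw [map_pow, sign_finRotate, ← pow_mul]
  apply neg_one_pow_congr
  obtain _ | m := m
  · simp
  · rw [← add_assoc, Nat.add_sub_cancel]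
    grind

theorem leadingMinor_eq_det_fromBlocks (A : ℕ → ℕ → R) (n m : ℕ) :
    leadingMinor A (n + m) = (-1) ^ (n * m) * (fromBlocks
      (of fun i j : Fin n => A (m + i) j) (of fun (i : Fin n) (j : Fin m) => A (m + i) (n + j))
      (of fun (i : Fin m) (j : Fin n) => A i j) (of fun i j : Fin m => A i (n + j))).det := by
  have hinl (i : Fin n) : ((finRotate (n + m))^[m] (Fin.castAdd m i) : ℕ) = m + i := by
    rw [val_iterate_finRotate, Fin.val_castAdd, Nat.mod_eq_of_lt (by omega), add_comm]
  have hinr (i : Fin m) : ((finRotate (n + m))^[m] (Fin.natAdd n i) : ℕ) = i := by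
    rw [val_iterate_finRotate, Fin.val_natAdd, add_right_comm, Nat.add_mod_left,
      Nat.mod_eq_of_lt (by omega)]
  have hsign := det_permute (finRotate (n + m) ^ m) (of fun i j : Fin (n + m) => A i j)
  rw [sign_finRotate_pow, ← det_submatrix_equiv_self finSumFinEquiv] at hsign
  push_cast at hsign
  have hblocks : fromBlocks
      (of fun i j : Fin n => A (m + i) j) (of fun (i : Fin n) (j : Fin m) => A (m + i) (n + j))
      (of fun (i : Fin m) (j : Fin n) => A i j) (of fun i j : Fin m => A i (n + j)) =
      ((of fun i j : Fin (n + m) => A i j).submatrix (finRotate (n + m))^[m] id).submatrix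
        finSumFinEquiv finSumFinEquiv := by
    ext x y
    obtain i | i := x <;> obtain j | j := y <;> simp [hinl, hinr]
  rw [hblocks, hsign, ← mul_assoc, ← mul_pow, neg_one_mul, neg_neg, one_pow, one_mul, leadingMinor]

theorem leadingMinor_swap (A : ℕ → ℕ → R) (k : ℕ) :
    leadingMinor (fun i j => A j i) k = leadingMinor A k :=
  det_transpose _

theorem det_sum_mul_coeff_borderedPoly (A : ℕ → ℕ → R) (n m : ℕ) :
    det (of fun i j : Fin n =>
      ∑ r ∈ range (n + m), A r (m + i) * (borderedPoly A (m + j)).coeff r) =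
      ∏ j ∈ range n, leadingMinor A (m + j + 1) := by
  rw [det_of_isLowerTriangular, ← Fin.prod_univ_eq_prod_range]
  · exact prod_congr rfl fun j _ => sum_mul_coeff_borderedPoly_self A (by omega)
  · intro i j (hij : i < j)
    exact sum_mul_coeff_borderedPoly_of_lt A (by omega) (by omega)

theorem leadingMinor_mul_det_coeff_borderedPoly (A : ℕ → ℕ → R) (n m : ℕ) :
    leadingMinor A (n + m) * det (of fun i j : Fin n => (borderedPoly A (m + j)).coeff i) =
      (-1) ^ (n * m) * (∏ j ∈ range n, leadingMinor A (m + j + 1)) *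
        det (of fun i j : Fin m => A (n + j) i) := by
  let W : Matrix (Fin n) (Fin n) R := of fun i j => (borderedPoly A (m + j)).coeff i
  let V : Matrix (Fin m) (Fin n) R := of fun i j => (borderedPoly A (m + j)).coeff (n + i)
  let B₁₁ : Matrix (Fin n) (Fin n) R := of fun i j => A j (m + i)
  let B₁₂ : Matrix (Fin n) (Fin m) R := of fun i j => A (n + j) (m + i)
  let B₂₁ : Matrix (Fin m) (Fin n) R := of fun i j => A j i
  let B₂₂ : Matrix (Fin m) (Fin m) R := of fun i j => A (n + j) i
  let L : Matrix (Fin n) (Fin n) R := of fun i j =>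
    ∑ r ∈ range (n + m), A r (m + i) * (borderedPoly A (m + j)).coeff r
  have h₁₁ : B₁₁ * W + B₁₂ * V = L := by
    ext i j
    simp only [B₁₁, B₁₂, W, V, L, Matrix.add_apply, mul_apply, of_apply]
    rw [sum_range_add, Finset.sum_range, Finset.sum_range]
  have h₂₁ : B₂₁ * W + B₂₂ * V = 0 := by
    ext i j
    simp only [B₂₁, B₂₂, W, V, Matrix.add_apply, mul_apply, of_apply, Matrix.zero_apply]
    rw [← sum_mul_coeff_borderedPoly_of_lt A (i.2.trans_le (Nat.le_add_right m j))
      (by omega : m + (j : ℕ) < n + m), sum_range_add, Finset.sum_range, Finset.sum_range]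
  calc
    leadingMinor A (n + m) * W.det
      = (-1) ^ (n * m) * (fromBlocks B₁₁ B₁₂ B₂₁ B₂₂ * fromBlocks W 0 V 1).det := by
        rw [← leadingMinor_swap, leadingMinor_eq_det_fromBlocks, det_mul, det_fromBlocks_zero₁₂ W,
          det_one, mul_one, mul_assoc]
    _ = (-1) ^ (n * m) * (fromBlocks L B₁₂ 0 B₂₂).det := by
        rw [fromBlocks_multiply, h₁₁, h₂₁]
        simp
    _ = (-1) ^ (n * m) * (∏ j ∈ range n, leadingMinor A (m + j + 1)) * B₂₂.det := by
        rw [det_fromBlocks_zero₂₁, det_sum_mul_coeff_borderedPoly, mul_assoc]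

theorem det_coeff_borderedPoly (A : ℕ → ℕ → R) (n m : ℕ) :
    det (of fun i j : Fin (n + 1) => (borderedPoly A (m + j)).coeff i) =
      (-1) ^ ((n + 1) * m) * (∏ j ∈ range n, leadingMinor A (m + j + 1)) *
        det (of fun i j : Fin m => A (n + 1 + j) i) := by
  -- Adding `X` along the diagonal makes the surplus factor `leadingMinor A' (n + 1 + m)` a
  -- characteristic polynomial, which can be cancelled over any ring.
  let A' : ℕ → ℕ → R[X] := fun i j => (if i = j then X else 0) + C (A i j)
  have hA' : (fun i j => evalRingHom 0 (A' i j)) = A := by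
    ext i j
    simp [A', apply_ite (eval (0 : R))]
  have hmonic : (leadingMinor A' (n + 1 + m)).Monic := by
    convert! charpoly_monic (-of fun i j : Fin (n + 1 + m) => A i j)
    rw [leadingMinor, charpoly]
    congr 1
    ext1 i j
    simp [A', charmatrix_apply, diagonal_apply, Fin.ext_iff]
  have hgeneric : det (of fun i j : Fin (n + 1) => (borderedPoly A' (m + j)).coeff i) =
      (-1) ^ ((n + 1) * m) * (∏ j ∈ range n, leadingMinor A' (m + j + 1)) *
        det (of fun i j : Fin m => A' (n + 1 + j) i) := by
    apply hmonic.isRegular.left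
    dsimp only
    rw [leadingMinor_mul_det_coeff_borderedPoly, prod_range_succ,
      show m + n + 1 = n + 1 + m by ring]
    ring
  have hcoeff (k i : ℕ) :
      evalRingHom 0 ((borderedPoly A' k).coeff i) = (borderedPoly A k).coeff i := by
    rw [← coeff_map, map_borderedPoly, hA']
  have h := congrArg (evalRingHom 0) hgeneric
  simp only [map_mul, map_pow, map_neg, map_one, map_prod, map_leadingMinor, RingHom.map_det, hA',
    RingHom.mapMatrix_apply] at h
  convert! h using 3
  · ext1 i j
    exact (hcoeff _ _).symm
  · ext1 i j
    exact (congrFun₂ hA' _ _).symm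

theorem det_linearMap_eq_det_linearMap_X_pow [Algebra R S] {k : ℕ} (f : Fin k → R[X])
    (hdeg : ∀ i, (f i).natDegree = i) (hmonic : ∀ i, (f i).Monic) (φ : Fin k → R[X] →ₗ[R] S) :
    det (of fun i j => φ j (f i)) = det (of fun i j : Fin k => φ j (X ^ (i : ℕ))) := by
  have hmul : of (fun i j => φ j (f i)) =
      ((of fun i j : Fin k => (f j).coeff i).map (algebraMap R S))ᵀ *
        of fun i j : Fin k => φ j (X ^ (i : ℕ)) := by
    ext i j
    conv_lhs =>
      rw [of_apply, as_sum_range_C_mul_X_pow' (f i) ((hdeg i).trans_lt i.2), Finset.sum_range]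
    simp_rw [map_sum, ← smul_eq_C_mul, map_smul, Algebra.smul_def]
    rfl
  rw [hmul, det_mul, det_transpose, ← RingHom.mapMatrix_apply, ← RingHom.map_det,
    det_matrixOfPolynomials f hdeg hmonic, map_one, one_mul]

theorem det_linearMap_X_sub_C_pow [Algebra R S] {k : ℕ} (φ : Fin k → R[X] →ₗ[R] S) (x : R) :
    det (of fun i j : Fin k => φ j ((X - C x) ^ (i : ℕ))) =
      det (of fun i j : Fin k => φ j (X ^ (i : ℕ))) := by
  nontriviality S
  have : Nontrivial R := (algebraMap R S).domain_nontrivial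
  refine det_linearMap_eq_det_linearMap_X_pow _ (fun i => ?_) (fun i => (monic_X_sub_C x).pow i) φ
  rw [(monic_X_sub_C x).natDegree_pow, natDegree_X_sub_C, mul_one]

theorem taylor_borderedPoly (φ : ℕ → R[X] →ₗ[R] R) (k : ℕ) (x : R) :
    taylor x (borderedPoly (fun i j => φ j (X ^ i)) k) =
      borderedPoly (fun i j => φ j ((X - C x) ^ i)) k := by
  let ψ : Fin (k + 1) → R[X] →ₗ[R] R[X] := fun j =>
    if (j : ℕ) < k then Algebra.linearMap R R[X] ∘ₗ φ j else taylor x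
  calc
    _ = det (of fun i j : Fin (k + 1) => ψ j (X ^ (i : ℕ))) := by
      rw [borderedPoly]
      refine (AlgHom.map_det (taylorAlgHom x) _).trans ?_
      congr 1
      ext1 i j
      by_cases hj : (j : ℕ) < k <;> simp [bordered, ψ, hj]
    _ = det (of fun i j : Fin (k + 1) => ψ j ((X - C x) ^ (i : ℕ))) :=
      (det_linearMap_X_sub_C_pow ψ x).symm
    _ = _ := by
      rw [borderedPoly]
      congr 1
      ext1 i j
      by_cases hj : (j : ℕ) < k <;> simp [bordered, ψ, hj]

@[simp]
theorem momentFunctional_X_pow (a : ℕ → R) (n : ℕ) : momentFunctional a (X ^ n) = a n := by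
  rw [← one_mul (X ^ n), ← C_1, C_mul_X_pow_eq_monomial]
  exact (basisMonomials R).constr_basis R a n

theorem momentFunctional_X_sub_C_pow (a : ℕ → R) (x : R) (n : ℕ) :
    momentFunctional a ((X - C x) ^ n) =
      ∑ j ∈ range (n + 1), a j * n.choose j * (-x) ^ (n - j) := by
  rw [sub_eq_add_neg, add_pow, map_sum]
  refine sum_congr rfl fun j _ => ?_
  rw [← C_neg, ← C_pow, ← C_eq_natCast, mul_assoc, ← C_mul, mul_comm, ← smul_eq_C_mul, map_smul,
    momentFunctional_X_pow, smul_eq_mul]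
  ring

theorem eval_iterate_derivative (f : R[X]) (k : ℕ) (x : R) :
    (derivative^[k] f).eval x = k.factorial * (taylor x f).coeff k := by
  rw [taylor_coeff, ← factorial_smul_hasseDeriv, LinearMap.smul_apply, eval_smul, nsmul_eq_mul]

theorem det_eval_iterate_derivative {n : ℕ} (f : Fin n → R[X]) (x : R) :
    det (of fun i j : Fin n => (derivative^[i] (f j)).eval x) =
      (∏ i ∈ range n, (i.factorial : R)) *
        det (of fun i j : Fin n => (taylor x (f j)).coeff i) := by
  simp_rw [eval_iterate_derivative]
  rw [← Fin.prod_univ_eq_prod_range]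
  exact det_mul_column (fun i : Fin n => ((i : ℕ).factorial : R))
    (of fun i j : Fin n => (taylor x (f j)).coeff i)

theorem leadingMinor_linearMap_X_sub_C_pow [Algebra R S] (φ : ℕ → R[X] →ₗ[R] S) (k : ℕ) (x : R) :
    leadingMinor (fun i j => φ j ((X - C x) ^ i)) k = leadingMinor (fun i j => φ j (X ^ i)) k :=
  det_linearMap_X_sub_C_pow (fun j : Fin k => φ j) x

theorem det_momentFunctional_X_sub_C_pow_mul_X_pow (a : ℕ → R) (n m : ℕ) (x : R) :
    det (of fun i j : Fin m => momentFunctional a ((X - C x) ^ (n + j : ℕ) * X ^ (i : ℕ))) =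
      det (of fun i j : Fin m => momentFunctional a ((X - C x) ^ (n + i + j : ℕ))) := by
  have h := det_linearMap_X_sub_C_pow (k := m)
    (fun j => momentFunctional a ∘ₗ LinearMap.mulLeft R ((X - C x) ^ (n + j : ℕ))) x
  simp only [LinearMap.comp_apply, LinearMap.mulLeft_apply, ← pow_add] at h
  simp_rw [← h, add_right_comm n]

theorem det_iterate_derivative_borderedPoly (a : ℕ → R) (n m : ℕ) (x : R) :
    det (of fun i j : Fin (n + 1) =>
      (derivative^[i] (borderedPoly (fun i j => a (i + j)) (m + j))).eval x) =
    (-1) ^ ((n + 1) * m) *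
      (∏ k ∈ Icc 1 n, (k.factorial * leadingMinor (fun i j => a (i + j)) (k + m))) *
      det (of fun i j : Fin m => momentFunctional a ((X - C x) ^ (n + 1 + i + j))) := by
  let φ : ℕ → R[X] →ₗ[R] R := fun j => momentFunctional a ∘ₗ LinearMap.mulRight R (X ^ j)
  have hφ : (fun i j => a (i + j)) = fun i j => φ j (X ^ i) := by
    ext i j
    simp [φ, ← pow_add]
  have hIcc (f : ℕ → R) : ∏ k ∈ Icc 1 n, f k = ∏ j ∈ range n, f (j + 1) := by
    rw [range_eq_Ico, prod_Ico_add' f 0 n 1]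
    rfl
  have hminor (j : ℕ) : leadingMinor (fun i j => φ j ((X - C x) ^ i)) (m + j + 1) =
      leadingMinor (fun i j => a (i + j)) (j + 1 + m) := by
    rw [leadingMinor_linearMap_X_sub_C_pow, hφ, show m + j + 1 = j + 1 + m by ring]
  rw [det_eval_iterate_derivative]
  calc
    _ = (∏ i ∈ range (n + 1), (i.factorial : R)) * det (of fun i j : Fin (n + 1) =>
          (borderedPoly (fun i j => φ j ((X - C x) ^ i)) (m + j)).coeff i) := by
      simp_rw [hφ, taylor_borderedPoly]
    _ = _ := by
      rw [det_coeff_borderedPoly]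
      simp_rw [hminor]
      rw [← det_momentFunctional_X_sub_C_pow_mul_X_pow, hIcc, prod_mul_distrib, prod_range_succ',
        Nat.factorial_zero, Nat.cast_one]
      simp only [φ, LinearMap.comp_apply, LinearMap.mulRight_apply]
      ring

end CommRing

theorem iteratedDeriv_eval {𝕜 : Type*} [NontriviallyNormedField 𝕜] (f : 𝕜[X]) (k : ℕ) :
    iteratedDeriv k (fun x => f.eval x) = fun x => (derivative^[k] f).eval x := by
  induction k with
  | zero => simp
  | succ k ih =>
    ext x
    rw [iteratedDeriv_succ, ih, Function.iterate_succ_apply', Polynomial.deriv]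

end LeclercWronskian

open LeclercWronskian

theorem leclerc_wronskian_hankel_general {𝕜 : Type*} [NontriviallyNormedField 𝕜]
    (a : ℕ → 𝕜) (p q : ℕ → 𝕜 → 𝕜) (hp0 : p 0 = fun _ => 1)
    (hp : ∀ n : ℕ, 1 ≤ n → ∀ x : 𝕜, p n x =
      Matrix.det (Matrix.of fun i j : Fin (n + 1) =>
        if (j : ℕ) < n then a ((i : ℕ) + (j : ℕ)) else x ^ (i : ℕ)))
    (hq : ∀ n : ℕ, ∀ x : 𝕜, q n x =
      ∑ j ∈ Finset.range (n + 1), a j * (n.choose j : 𝕜) * (-x) ^ (n - j))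
    (n m : ℕ) (hn : 1 ≤ n) (x : 𝕜) :
    Matrix.det (Matrix.of fun i j : Fin n =>
        iteratedDeriv (i : ℕ) (p (m + (j : ℕ))) x)
      = (-1 : 𝕜) ^ (n * m) *
        (∏ k ∈ Finset.Icc 1 (n - 1),
          ((k.factorial : 𝕜) *
            Matrix.det (Matrix.of fun i j : Fin (k + m) => a ((i : ℕ) + (j : ℕ))))) *
        Matrix.det (Matrix.of fun i j : Fin m => q (n + (i : ℕ) + (j : ℕ)) x) := by
  have hp_eval (k : ℕ) : p k = fun y => (borderedPoly (fun i j => a (i + j)) k).eval y := by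
    funext y
    obtain rfl | hk := k.eq_zero_or_pos
    · simp [hp0, borderedPoly_zero]
    · rw [hp k hk, eval_borderedPoly, bordered]
  have hq_moment (k : ℕ) : q k x = momentFunctional a ((X - C x) ^ k) := by
    rw [hq, momentFunctional_X_sub_C_pow]
  obtain ⟨n, rfl⟩ := Nat.exists_eq_add_one.2 hn
  simp_rw [hp_eval, hq_moment, iteratedDeriv_eval]
  exact det_iterate_derivative_borderedPoly a n m x

/-- Leclerc's theorem relating Wronskians of (pseudo-)orthogonal
polynomials built from a sequence `a` to Hankel determinants of the
polynomials `q_n`. -/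
theorem leclerc_wronskian_hankel (a : ℕ → ℝ) (p q : ℕ → ℝ → ℝ)
    (hp0 : p 0 = fun _ => 1)
    (hp : ∀ n : ℕ, 1 ≤ n → ∀ x : ℝ, p n x =
      Matrix.det (Matrix.of fun i j : Fin (n + 1) =>
        if (j : ℕ) < n then a ((i : ℕ) + (j : ℕ)) else x ^ (i : ℕ)))
    (hq : ∀ n : ℕ, ∀ x : ℝ, q n x =
      ∑ j ∈ Finset.range (n + 1), a j * (n.choose j : ℝ) * (-x) ^ (n - j)) :
    ∀ n m : ℕ, 1 ≤ n → 1 ≤ m → ∀ x : ℝ,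
      Matrix.det (Matrix.of fun i j : Fin n =>
        iteratedDeriv (i : ℕ) (p (m + (j : ℕ))) x)
      = (-1 : ℝ) ^ (n * m) *
        (∏ k ∈ Finset.Icc 1 (n - 1),
          ((k.factorial : ℝ) *
            Matrix.det (Matrix.of fun i j : Fin (k + m) => a ((i : ℕ) + (j : ℕ))))) *
        Matrix.det (Matrix.of fun i j : Fin m => q (n + (i : ℕ) + (j : ℕ)) x) :=
  fun n m hn _ x => leclerc_wronskian_hankel_general a p q hp0 hp hq n m hn x
end

section
/- Let T, (r_n), (s_n) be as in the context, let \mu be a positive Borel measure on \mathbb{R} for which every polynomial is integrable, let (p_n)_{n\ge 0} be a sequence of polynomials with deg p_n = n that is orthogonal with respect to \mu (i.e. \int p_n p_k d\mu = 0 whenever n \ne k), and let (\psi_i)_{i\ge 0} be polynomials with deg \psi_i = i. Set \mu_j^i = \int r_j \psi_i \, d\mu and define q_n^i(x) = \sum_{j=0}^n \mu_j^i s_{n-j}(x). Let \Omega_{m-1} = \det( \mu_{m-i}^{j-1} )_{i,j=1}^{m}, let \xi_n be the leading coefficient of p_n and \sigma_n the leading coefficient of r_n. Then for all integers n, m \ge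 1 and all real x: \Omega_{m-1} \cdot \det( T^{i-1}(p_{m+j-1})(x) )_{i,j=1}^n = (-1)^{mn + \binom{m}{2}} \left( \prod_{j=0}^{n-1} \frac{\xi_{m+j}}{\sigma_{m+j}} \right) \cdot \det( q^{j-1}_{n+i-1}(x) )_{i,j=1}^m. -/
open MeasureTheory Polynomial

/-!
Fix `n`, `m` and `x`, and attach to a sequence `u` of polynomials with `deg u_k = k` the square
matrix whose `k`-th row, `k < n + m`, consists of `u_k(x), (T u_k)(x), …, (T^(n-1) u_k)(x)`
followed by the moments `∫ u_k ψ_0 dμ, …, ∫ u_k ψ_(m-1) dμ`. Passing from one sequence `u` to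
another multiplies the determinant by the ratio of the products of the leading coefficients.

For `u = r` the first `n` columns are the Toeplitz columns `(r_(k-i)(x))_k`. As `∑ s_k t^k` is the
inverse of `∑ r_k t^k`, multiplication by the unitriangular Toeplitz matrix of `s` turns them into
unit vectors and the remaining columns into `(q_k^j(x))_k`, which leaves the determinant of the
`q`s. For `u = (r_0, …, r_(m-1), p_m, p_(m+1), …)` orthogonality makes the lower right block
vanish, so that the determinant is, up to sign, the product of the Wronskian-type determinant and
`Ω_(m-1)`.
-/

section Determinants

variable {R : Type*} [CommRing R]

theorem sign_revPerm (n : ℕ) :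
    Equiv.Perm.sign (Fin.revPerm : Equiv.Perm (Fin n)) = (-1) ^ n.choose 2 := by
  have hinv (i : Fin n) :
      ∏ j ∈ Finset.Ioi i, (if Fin.revPerm i < Fin.revPerm j then (1 : ℤˣ) else -1) =
        (-1) ^ (n - 1 - (i : ℕ)) := by
    have hlt (j) (hj : j ∈ Finset.Ioi i) : ¬ Fin.revPerm i < Fin.revPerm j := by
      simpa only [Fin.revPerm_apply, Fin.rev_lt_rev] using (Finset.mem_Ioi.mp hj).not_gt
    rw [Finset.prod_congr rfl fun j hj => if_neg (hlt j hj), Finset.prod_const, Fin.card_Ioi]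
  rw [Equiv.Perm.sign_eq_prod_prod_Ioi, Finset.prod_congr rfl fun i _ => hinv i,
    Fin.prod_univ_eq_prod_range (fun i => (-1 : ℤˣ) ^ (n - 1 - i)) n,
    Finset.prod_range_reflect (fun i => (-1 : ℤˣ) ^ i) n, Finset.prod_pow_eq_pow_sum,
    Finset.sum_range_id, Nat.choose_two_right]

theorem det_submatrix_rev {n : ℕ} (A : Matrix (Fin n) (Fin n) R) :
    (A.submatrix Fin.rev id).det = (-1) ^ n.choose 2 * A.det := by
  rw [show A.submatrix Fin.rev id = A.submatrix Fin.revPerm id from rfl, Matrix.det_permute,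
    sign_revPerm]
  simp

theorem add_choose_two (n m : ℕ) :
    (n + m).choose 2 = n.choose 2 + n * m + m.choose 2 := by
  induction m with
  | zero => simp
  | succ m ih =>
    rw [← add_assoc, Nat.choose_succ_succ' (n + m) 1, Nat.choose_succ_succ' m 1, ih,
      Nat.choose_one_right, Nat.choose_one_right]
    ring

theorem det_of_left_columns_eq_single {n m : ℕ} (A : ℕ → Fin n ⊕ Fin m → R)
    (hA : ∀ k i, A k (.inl i) = if k = i then 1 else 0) :
    (Matrix.of fun k l : Fin (n + m) => A k (finSumFinEquiv.symm l)).det =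
      (Matrix.of fun i j : Fin m => A (n + i) (.inr j)).det := by
  rw [← Matrix.det_submatrix_equiv_self finSumFinEquiv]
  have hblocks : (Matrix.of fun k l : Fin (n + m) => A k (finSumFinEquiv.symm l)).submatrix
      finSumFinEquiv finSumFinEquiv =
      Matrix.fromBlocks 1 (Matrix.of fun (i : Fin n) (j : Fin m) => A i (.inr j)) 0
        (Matrix.of fun i j : Fin m => A (n + i) (.inr j)) := by
    ext (k | k) (l | l)
    · simp [hA, Matrix.one_apply, Fin.ext_iff]
    · simp
    · simp [hA, show n + (k : ℕ) ≠ l by omega]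
    · simp
  rw [hblocks, Matrix.det_fromBlocks_zero₂₁, Matrix.det_one, one_mul]

theorem det_of_lower_right_block_eq_zero {n m : ℕ} (A : ℕ → Fin n ⊕ Fin m → R)
    (hA : ∀ i < n, ∀ j, A (m + i) (.inr j) = 0) :
    (Matrix.of fun k l : Fin (n + m) => A k (finSumFinEquiv.symm l)).det =
      (-1) ^ (m * n + m.choose 2) *
        ((Matrix.of fun i j : Fin m => A (m - 1 - (i : ℕ)) (.inr j)).det *
          (Matrix.of fun i j : Fin n => A (m + i) (.inl j)).det) := by
  set B := Matrix.of fun k l : Fin (n + m) => A k (finSumFinEquiv.symm l)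
  set Ω := Matrix.of fun i j : Fin m => A (m - 1 - (i : ℕ)) (.inr j)
  set W := Matrix.of fun i j : Fin n => A (m + i) (.inl j)
  -- Reversing the order of the rows makes the matrix block lower triangular.
  have hblocks : (B.submatrix Fin.rev id).submatrix finSumFinEquiv finSumFinEquiv =
      Matrix.fromBlocks (W.submatrix Fin.rev id) 0
        (Matrix.of fun (i : Fin m) (j : Fin n) => A (m - 1 - (i : ℕ)) (.inl j)) Ω := by
    have hupper (i : Fin n) : n + m - (i + 1) = m + (n - (i + 1)) := by omega
    have hlower (i : Fin m) : n + m - (n + i + 1) = m - 1 - i := by omega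
    ext (k | k) (l | l)
    · simp [B, W, Fin.val_rev, hupper]
    · simp [B, Fin.val_rev, hupper, hA (n - (k + 1)) (by omega)]
    · simp [B, Fin.val_rev, hlower]
    · simp [B, Ω, Fin.val_rev, hlower]
  have hrev : (-1) ^ (n + m).choose 2 * B.det = (-1) ^ n.choose 2 * W.det * Ω.det := by
    rw [← det_submatrix_rev, ← Matrix.det_submatrix_equiv_self finSumFinEquiv, hblocks,
      Matrix.det_fromBlocks_zero₁₂, det_submatrix_rev]
  have hsq (k : ℕ) : ((-1 : R) ^ k) * (-1) ^ k = 1 := by rw [← mul_pow]; simp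
  calc B.det = (-1) ^ (n + m).choose 2 * ((-1) ^ (n + m).choose 2 * B.det) := by
        rw [← mul_assoc, hsq, one_mul]
    _ = (-1) ^ n.choose 2 * (-1) ^ n.choose 2 *
          ((-1) ^ (m * n + m.choose 2) * (Ω.det * W.det)) := by
        rw [hrev, add_choose_two]; ring
    _ = _ := by rw [hsq, one_mul]

theorem det_powerSeries_coeff_mul {N : ℕ} (S : PowerSeries R) (f : Fin N → PowerSeries R) :
    (Matrix.of fun k l : Fin N => PowerSeries.coeff k (S * f l)).det =
      PowerSeries.constantCoeff S ^ N *
        (Matrix.of fun k l : Fin N => PowerSeries.coeff k (f l)).det := by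
  set toeplitz : Matrix (Fin N) (Fin N) R :=
    Matrix.of fun k i => PowerSeries.coeff k (PowerSeries.X ^ (i : ℕ) * S)
  have htri : toeplitz.IsLowerTriangular := fun k i hki => by
    have hki : (k : ℕ) < i := hki
    simp only [toeplitz, Matrix.of_apply, PowerSeries.coeff_X_pow_mul', if_neg hki.not_ge]
  have hdet : toeplitz.det = PowerSeries.constantCoeff S ^ N := by
    rw [Matrix.det_of_isLowerTriangular _ htri]
    simp [toeplitz, PowerSeries.coeff_X_pow_mul']
  have hmul : (Matrix.of fun k l : Fin N => PowerSeries.coeff k (S * f l)) =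
      toeplitz * Matrix.of fun k l : Fin N => PowerSeries.coeff k (f l) := by
    ext k l
    simp only [Matrix.mul_apply, Matrix.of_apply, toeplitz, PowerSeries.coeff_X_pow_mul', ite_mul,
      zero_mul]
    rw [mul_comm S, PowerSeries.coeff_mul, Finset.Nat.sum_antidiagonal_eq_sum_range_succ
        fun i j => PowerSeries.coeff i (f l) * PowerSeries.coeff j S,
      Fin.sum_univ_eq_sum_range (fun i => if i ≤ (k : ℕ) then
        PowerSeries.coeff (k - i) S * PowerSeries.coeff i (f l) else 0) N, ← Finset.sum_filter]
    refine Finset.sum_congr ?_ fun i _ => mul_comm _ _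
    ext i
    simp only [Finset.mem_range, Finset.mem_filter]
    omega
  rw [hmul, Matrix.det_mul, hdet]

end Determinants

theorem pow_apply_of_lowering {R V : Type*} [Semiring R] [AddCommMonoid V] [Module R V]
    (T : Module.End R V) (r : ℕ → V) (h0 : T (r 0) = 0) (hT : ∀ n, 1 ≤ n → T (r n) = r (n - 1))
    (i k : ℕ) : (T ^ i) (r k) = if i ≤ k then r (k - i) else 0 := by
  induction i generalizing k with
  | zero => simp
  | succ i ih =>
    rw [pow_succ, Module.End.mul_apply]
    cases k with
    | zero => simp [h0]
    | succ k => simp [hT, ih]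

theorem powerSeries_mk_mul_mk_eq_one {R : Type*} [Semiring R] (s r : ℕ → R)
    (hs0 : s 0 = 1) (hr0 : r 0 = 1)
    (hs : ∀ n, 1 ≤ n → ∑ j ∈ Finset.range (n + 1), s j * r (n - j) = 0) :
    PowerSeries.mk s * PowerSeries.mk r = 1 := by
  ext n
  rw [PowerSeries.coeff_mul]
  simp only [PowerSeries.coeff_mk, PowerSeries.coeff_one,
    Finset.Nat.sum_antidiagonal_eq_sum_range_succ fun i j => s i * r j]
  rcases n.eq_zero_or_pos with rfl | hn
  · simp [hs0, hr0]
  · rw [hs n hn, if_neg hn.ne']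

section PolynomialSequences

theorem det_apply_eq_prod_leadingCoeff_mul {R : Type*} [CommRing R] {N : ℕ} (u : ℕ → R[X])
    (hu : ∀ k, (u k).natDegree = k) (L : Fin N → R[X] →ₗ[R] R) :
    (Matrix.of fun k l : Fin N => L l (u k)).det =
      (∏ k ∈ Finset.range N, (u k).leadingCoeff) *
        (Matrix.of fun k l : Fin N => L l (X ^ (k : ℕ))).det := by
  set c : Matrix (Fin N) (Fin N) R := Matrix.of fun k i => (u k).coeff i
  have htri : c.IsLowerTriangular := fun k i hki =>
    coeff_eq_zero_of_natDegree_lt ((hu k).trans_lt hki)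
  have hdet : c.det = ∏ k ∈ Finset.range N, (u k).leadingCoeff := by
    rw [Matrix.det_of_isLowerTriangular _ htri,
      ← Fin.prod_univ_eq_prod_range fun k => (u k).leadingCoeff]
    simp [c, leadingCoeff, hu]
  have hmul : (Matrix.of fun k l : Fin N => L l (u k)) =
      c * Matrix.of fun k l : Fin N => L l (X ^ (k : ℕ)) := by
    ext k l
    have hk : (u k).natDegree < N := (hu k).trans_lt k.2
    simp only [Matrix.mul_apply, Matrix.of_apply, c]
    rw [Fin.sum_univ_eq_sum_range (fun i => (u k).coeff i * L l (X ^ i)) N]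
    conv_lhs => rw [as_sum_range' (u k) N hk, map_sum]
    simp [← smul_X_eq_monomial]
  rw [hmul, Matrix.det_mul, hdet]

variable {K : Type*} [Field K]

theorem det_apply_eq_prod_leadingCoeff_div_mul {N : ℕ} (u r : ℕ → K[X])
    (hu : ∀ k, (u k).degree = k) (hr : ∀ k, (r k).degree = k) (L : Fin N → K[X] →ₗ[K] K) :
    (Matrix.of fun k l : Fin N => L l (u k)).det =
      (∏ k ∈ Finset.range N, (u k).leadingCoeff / (r k).leadingCoeff) *
        (Matrix.of fun k l : Fin N => L l (r k)).det := by
  have hr0 : ∏ k ∈ Finset.range N, (r k).leadingCoeff ≠ 0 :=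
    Finset.prod_ne_zero_iff.mpr fun k _ => leadingCoeff_ne_zero.mpr <|
      degree_ne_bot.mp (by simp [hr k])
  rw [det_apply_eq_prod_leadingCoeff_mul u fun k => natDegree_eq_of_degree_eq_some (hu k),
    det_apply_eq_prod_leadingCoeff_mul r fun k => natDegree_eq_of_degree_eq_some (hr k),
    Finset.prod_div_distrib, ← mul_assoc, div_mul_cancel₀ _ hr0]

theorem apply_mul_eq_zero_of_degree_lt (Λ : K[X] →ₗ[K] K) (p : ℕ → K[X])
    (hpdeg : ∀ n, (p n).degree = n) (hporth : ∀ n k, n ≠ k → Λ (p n * p k) = 0)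
    {n : ℕ} {f : K[X]} (hf : f.degree < n) : Λ (p n * f) = 0 := by
  let P : Polynomial.Sequence K := ⟨p, hpdeg⟩
  have hspan : Submodule.span K (p '' Set.Iio n) = degreeLT K n :=
    P.span_degreeLT fun i _ => (leadingCoeff_ne_zero.mpr (P.ne_zero i)).isUnit
  have hker : Submodule.span K (p '' Set.Iio n) ≤ (Λ ∘ₗ LinearMap.mulLeft K (p n)).ker := by
    rw [Submodule.span_le]
    rintro _ ⟨k, hk, rfl⟩
    exact hporth n k (Set.mem_Iio.mp hk).ne'
  exact hker (hspan ▸ mem_degreeLT.mpr hf)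

end PolynomialSequences

section WronskianMoment

variable {R : Type*} [CommRing R]

/-- The `n + m` functionals `u ↦ (T^i u)(x)`, `i < n`, and `u ↦ Λ (u ψ_j)`, `j < m`. Their values on
a sequence of polynomials form a matrix that contains both the Wronskian-type matrix and the matrix
of moments. -/
noncomputable def wronskianMoment (T : Module.End R R[X]) (Λ : R[X] →ₗ[R] R) (ψ : ℕ → R[X]) (x : R)
    (n m : ℕ) : Fin n ⊕ Fin m → R[X] →ₗ[R] R :=
  Sum.elim (fun i => leval x ∘ₗ T ^ (i : ℕ)) (fun j => Λ ∘ₗ LinearMap.mulRight R (ψ j))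

theorem det_wronskianMoment_lowering (T : Module.End R R[X]) (hT1 : T 1 = 0) (r s : ℕ → R[X])
    (hr0 : r 0 = 1) (hrT : ∀ n, 1 ≤ n → T (r n) = r (n - 1)) (hs0 : s 0 = 1)
    (hs : ∀ n, 1 ≤ n → ∑ j ∈ Finset.range (n + 1), s j * r (n - j) = 0)
    (Λ : R[X] →ₗ[R] R) (ψ : ℕ → R[X]) (n m : ℕ) (x : R) :
    (Matrix.of fun k l : Fin (n + m) =>
        wronskianMoment T Λ ψ x n m (finSumFinEquiv.symm l) (r k)).det =
      (Matrix.of fun i j : Fin m => (∑ k ∈ Finset.range (n + i + 1),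
        C (Λ (r k * ψ j)) * s (n + i - k)).eval x).det := by
  set S := PowerSeries.mk fun k => (s k).eval x
  set F : Fin n ⊕ Fin m → PowerSeries R := Sum.elim
    (fun i => PowerSeries.X ^ (i : ℕ) * PowerSeries.mk fun k => (r k).eval x)
    (fun j => PowerSeries.mk fun k => Λ (r k * ψ j))
  have hF (k : ℕ) (l) : wronskianMoment T Λ ψ x n m l (r k) = PowerSeries.coeff k (F l) := by
    rcases l with i | j
    · simp only [wronskianMoment, F, Sum.elim_inl, LinearMap.comp_apply,
        pow_apply_of_lowering T r (by rw [hr0, hT1]) hrT, PowerSeries.coeff_X_pow_mul']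
      split_ifs <;> simp [leval]
    · simp [wronskianMoment, F]
  have hSR : S * PowerSeries.mk (fun k => (r k).eval x) = 1 :=
    powerSeries_mk_mul_mk_eq_one _ _ (by simp [hs0]) (by simp [hr0]) fun k hk => by
      simpa [eval_finsetSum] using congrArg (eval x) (hs k hk)
  have hSF := det_powerSeries_coeff_mul S fun l : Fin (n + m) => F (finSumFinEquiv.symm l)
  rw [show PowerSeries.constantCoeff S = 1 by simp [S, hs0], one_pow, one_mul] at hSF
  simp only [hF]
  rw [← hSF, det_of_left_columns_eq_single fun k l => PowerSeries.coeff k (S * F l)]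
  · congr with i j
    simp [F, S, eval_finsetSum, PowerSeries.coeff_mul, mul_comm S,
      Finset.Nat.sum_antidiagonal_eq_sum_range_succ fun a b => Λ (r a * ψ j) * (s b).eval x]
  · intro k i
    rw [show S * F (.inl i) = PowerSeries.X ^ (i : ℕ) by
      simp only [F, Sum.elim_inl, mul_left_comm S, hSR, mul_one], PowerSeries.coeff_X_pow]

variable {K : Type*} [Field K]

theorem det_wronskianMoment_orthogonal (T : Module.End K K[X]) (r : ℕ → K[X])
    (Λ : K[X] →ₗ[K] K) (p : ℕ → K[X]) (hpdeg : ∀ n, (p n).degree = n)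
    (hporth : ∀ n k, n ≠ k → Λ (p n * p k) = 0)
    (ψ : ℕ → K[X]) (hψdeg : ∀ i, (ψ i).degree ≤ i) (n m : ℕ) (x : K) :
    (Matrix.of fun k l : Fin (n + m) => wronskianMoment T Λ ψ x n m (finSumFinEquiv.symm l)
        (if (k : ℕ) < m then r k else p k)).det =
      (-1) ^ (m * n + m.choose 2) *
        ((Matrix.of fun i j : Fin m => Λ (r (m - 1 - (i : ℕ)) * ψ j)).det *
          (Matrix.of fun i j : Fin n => ((T ^ (i : ℕ)) (p (m + (j : ℕ)))).eval x).det) := by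
  rw [det_of_lower_right_block_eq_zero
    (fun k l => wronskianMoment T Λ ψ x n m l (if k < m then r k else p k))]
  · congr 2
    · congr with i j
      simp [wronskianMoment, show m - 1 - (i : ℕ) < m by omega]
    · rw [← Matrix.det_transpose]
      congr with i j
      simp [wronskianMoment, leval]
  · intro i _ j
    have hdeg : (ψ j).degree < (m + i : ℕ) :=
      (hψdeg j).trans_lt (by exact_mod_cast show (j : ℕ) < m + i by omega)
    simpa [wronskianMoment] using apply_mul_eq_zero_of_degree_lt Λ p hpdeg hporth hdeg

theorem wronskian_type_det_orthogonal_general (T : Module.End K K[X]) (hT1 : T 1 = 0)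
    (r s : ℕ → K[X]) (hr0 : r 0 = 1) (hrdeg : ∀ n, (r n).degree = n)
    (hrT : ∀ n, 1 ≤ n → T (r n) = r (n - 1)) (hs0 : s 0 = 1)
    (hs : ∀ n, 1 ≤ n → ∑ j ∈ Finset.range (n + 1), s j * r (n - j) = 0)
    (Λ : K[X] →ₗ[K] K) (p : ℕ → K[X]) (hpdeg : ∀ n, (p n).degree = n)
    (hporth : ∀ n k, n ≠ k → Λ (p n * p k) = 0)
    (ψ : ℕ → K[X]) (hψdeg : ∀ i, (ψ i).degree ≤ i)
    (M : ℕ → ℕ → K) (hM : ∀ j i, M j i = Λ (r j * ψ i)) (q : ℕ → ℕ → K[X])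
    (hq : ∀ n i, q n i = ∑ j ∈ Finset.range (n + 1), C (M j i) * s (n - j)) (n m : ℕ) (x : K) :
    (Matrix.of fun i j : Fin m => M (m - 1 - (i : ℕ)) (j : ℕ)).det *
        (Matrix.of fun i j : Fin n => ((T ^ (i : ℕ)) (p (m + (j : ℕ)))).eval x).det =
      (-1) ^ (m * n + m.choose 2) *
        (∏ j ∈ Finset.range n, (p (m + j)).leadingCoeff / (r (m + j)).leadingCoeff) *
        (Matrix.of fun i j : Fin m => (q (n + (i : ℕ)) (j : ℕ)).eval x).det := by
  set u : ℕ → K[X] := fun k => if k < m then r k else p k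
  have hudeg (k : ℕ) : (u k).degree = k := by
    simp only [u]; split_ifs <;> simp only [hrdeg, hpdeg]
  have hprod : ∏ k ∈ Finset.range (n + m), (u k).leadingCoeff / (r k).leadingCoeff =
      ∏ j ∈ Finset.range n, (p (m + j)).leadingCoeff / (r (m + j)).leadingCoeff := by
    have hr_ne (k : ℕ) : (r k).leadingCoeff ≠ 0 :=
      leadingCoeff_ne_zero.mpr (degree_ne_bot.mp (by simp [hrdeg k]))
    rw [add_comm, Finset.prod_range_add, Finset.prod_eq_one, one_mul]
    · simp [u]
    · intro k hk
      simp only [u, if_pos (Finset.mem_range.mp hk), div_self (hr_ne k)]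
  have hsign : ((-1 : K) ^ (m * n + m.choose 2)) * (-1) ^ (m * n + m.choose 2) = 1 := by
    rw [← mul_pow]; simp
  have hu := det_wronskianMoment_orthogonal T r Λ p hpdeg hporth ψ hψdeg n m x
  rw [det_apply_eq_prod_leadingCoeff_div_mul u r hudeg hrdeg
    (fun l => wronskianMoment T Λ ψ x n m (finSumFinEquiv.symm l)), hprod,
    det_wronskianMoment_lowering T hT1 r s hr0 hrT hs0 hs] at hu
  simp only [hq, hM]
  rw [mul_assoc, hu, ← mul_assoc, hsign, one_mul]

end WronskianMoment

/-- Integration of real polynomials against a measure with finite moments, as a linear functional.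
The integrability of all polynomials is an argument because linearity depends on it. -/
noncomputable def momentFunctional (μ : Measure ℝ)
    (hint : ∀ f : ℝ[X], Integrable (fun x => f.eval x) μ) : ℝ[X] →ₗ[ℝ] ℝ where
  toFun f := ∫ x, f.eval x ∂μ
  map_add' f g := by simpa only [eval_add] using integral_add (hint f) (hint g)
  map_smul' a f := by
    simpa only [eval_smul, smul_eq_mul, RingHom.id_apply] using integral_const_mul a _

theorem momentFunctional_mul (μ : Measure ℝ)
    (hint : ∀ f : ℝ[X], Integrable (fun x => f.eval x) μ) (f g : ℝ[X]) :
    momentFunctional μ hint (f * g) = ∫ x, f.eval x * g.eval x ∂μ := by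
  simp [momentFunctional]

/-- the main theorem for a measure: a Wronskian-type determinant
of orthogonal polynomials with respect to a lowering operator `T` equals, up to
explicit constants, a determinant of the polynomials `q_n^i`. -/
theorem wronskian_type_det_orthogonal
    (T : Module.End ℝ (Polynomial ℝ))
    (hTC : ∀ c : ℝ, T (Polynomial.C c) = 0)
    (hTdeg : ∀ f : Polynomial ℝ, 0 < f.natDegree →
      (T f).degree = ((f.natDegree - 1 : ℕ) : WithBot ℕ))
    (r s : ℕ → Polynomial ℝ)
    (hr0 : r 0 = 1) (hrdeg : ∀ n : ℕ, (r n).degree = (n : ℕ))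
    (hrT : ∀ n : ℕ, 1 ≤ n → T (r n) = r (n - 1))
    (hs0 : s 0 = 1)
    (hs : ∀ n : ℕ, 1 ≤ n → ∑ j ∈ Finset.range (n + 1), s j * r (n - j) = 0)
    (μ : Measure ℝ)
    (hint : ∀ f : Polynomial ℝ, Integrable (fun x => f.eval x) μ)
    (p : ℕ → Polynomial ℝ) (hpdeg : ∀ n : ℕ, (p n).degree = (n : ℕ))
    (hporth : ∀ n k : ℕ, n ≠ k → ∫ x, (p n).eval x * (p k).eval x ∂μ = 0)
    (ψ : ℕ → Polynomial ℝ) (hψdeg : ∀ i : ℕ, (ψ i).degree = (i : ℕ))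
    (M : ℕ → ℕ → ℝ)
    (hM : ∀ j i : ℕ, M j i = ∫ x, (r j).eval x * (ψ i).eval x ∂μ)
    (q : ℕ → ℕ → Polynomial ℝ)
    (hq : ∀ n i : ℕ, q n i = ∑ j ∈ Finset.range (n + 1), Polynomial.C (M j i) * s (n - j)) :
    ∀ n m : ℕ, 1 ≤ n → 1 ≤ m → ∀ x : ℝ,
      Matrix.det (Matrix.of fun i j : Fin m => M (m - 1 - (i : ℕ)) (j : ℕ)) *
        Matrix.det (Matrix.of fun i j : Fin n =>
          ((T ^ (i : ℕ)) (p (m + (j : ℕ)))).eval x)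
      = (-1 : ℝ) ^ (m * n + m.choose 2) *
        (∏ j ∈ Finset.range n, (p (m + j)).leadingCoeff / (r (m + j)).leadingCoeff) *
        Matrix.det (Matrix.of fun i j : Fin m => (q (n + (i : ℕ)) (j : ℕ)).eval x) := by
  intro n m _ _
  exact wronskian_type_det_orthogonal_general T (by simpa using hTC 1) r s hr0 hrdeg hrT
    hs0 hs (momentFunctional μ hint) p hpdeg (by simpa only [momentFunctional_mul] using hporth)
    ψ (fun i => (hψdeg i).le) M (by simpa only [momentFunctional_mul] using hM) q hq n m
end

section
/- For every real number x and all natural numbers n, i, g with i \le g \le n+i: \binom{g}{i} \binom{-x+i}{n+i-g} = \sum_{j=0}^{\min(n,g)} \binom{j}{i+j-g} \binom{g}{g-j} \binom{-x}{n-j}, where for integers a \ge 0 and b, \binom{a}{b} denotes the ordinary binomial coefficient with the convention \binom{a}{b} = 0 when b < 0 or b > a, and \binom{-x+i}{n+i-g}, \binom{-x}{n-j} are generalized binomial coefficients. -/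
/-- The generalized binomial coefficient `x choose l = x(x-1)⋯(x-l+1)/l!`. -/
noncomputable def gbinom (x : ℝ) (l : ℕ) : ℝ :=
  (∏ k ∈ Finset.range l, (x - k)) / l.factorial

/-- The ordinary binomial coefficient with a possibly negative lower index
(equal to `0` when the lower index is negative). -/
def ichoose (a : ℕ) (b : ℤ) : ℕ := if 0 ≤ b then a.choose b.toNat else 0

/-! Trinomial revision turns `C(j, i+j-g) C(g, g-j)` into `C(g, i) C(i, g-j)`. The factor `C(g, i)`
does not depend on `j`. By symmetry `C(i, g-j) = C(i, i+j-g)`, and `(i+j-g) + (n-j) = n+i-g`, so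
`∑ j, C(i, g-j) C(-x, n-j)` is the Chu–Vandermonde expansion of `C(-x+i, n+i-g)`. -/

open Finset

theorem gbinom_eq_ringChoose (x : ℝ) (l : ℕ) : gbinom x l = Ring.choose x l := by
  rw [Ring.choose_eq_smul, gbinom, ← Polynomial.aeval_eq_smeval, Polynomial.aeval_def,
    Polynomial.eval₂_eq_eval_map, descPochhammer_map, descPochhammer_eval_eq_prod_range,
    smul_eq_mul, div_eq_inv_mul]

theorem ichoose_natCast (a b : ℕ) : ichoose a b = a.choose b := by
  simp [ichoose]

theorem ichoose_of_neg (a : ℕ) {b : ℤ} (hb : b < 0) : ichoose a b = 0 :=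
  if_neg hb.not_ge

theorem ichoose_mul_choose_sub (i : ℕ) {j g : ℕ} (hj : j ≤ g) :
    ichoose j ((i : ℤ) + j - g) * g.choose (g - j) = g.choose i * i.choose (g - j) := by
  rcases le_or_gt (g - j) i with hle | hlt
  · have hindex : (i : ℤ) + j - g = (i - (g - j) : ℕ) := by omega
    rw [hindex, ichoose_natCast, Nat.choose_mul hle, Nat.sub_sub_self hj, mul_comm]
  · rw [ichoose_of_neg j (by omega), Nat.choose_eq_zero_of_lt hlt, zero_mul, mul_zero]

section BinomialRing

variable {R : Type*} [Ring R] [BinomialRing R]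

theorem ringChoose_add_natCast (y : R) (i N : ℕ) :
    Ring.choose (y + i) N =
      ∑ k ∈ range (min N i + 1), (i.choose k : R) * Ring.choose y (N - k) := by
  rw [add_comm, Ring.add_choose_eq N (Nat.cast_commute i y),
    Nat.sum_antidiagonal_eq_sum_range_succ_mk]
  simp only [Ring.choose_natCast]
  refine (sum_subset (range_subset_range.2 (by omega)) fun k hkN hk ↦ ?_).symm
  have hik : i < k := by simp only [mem_range] at hkN hk; omega
  rw [Nat.choose_eq_zero_of_lt hik, Nat.cast_zero, zero_mul]

theorem ringChoose_add_natCast_eq_sum_choose_sub (y : R) {n i g : ℕ} (hig : i ≤ g)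
    (hgn : g ≤ n + i) :
    Ring.choose (y + i) (n + i - g) =
      ∑ j ∈ range (min n g + 1), (i.choose (g - j) : R) * Ring.choose y (n - j) := by
  obtain ⟨d, rfl⟩ := Nat.exists_eq_add_of_le' hig
  obtain ⟨N, rfl⟩ : ∃ N, n = d + N := Nat.exists_eq_add_of_le (by omega)
  have hlow : ∀ j ∈ range d,
      (i.choose (d + i - j) : R) * Ring.choose y (d + N - j) = 0 := fun j hj ↦ by
    rw [Nat.choose_eq_zero_of_lt (by have := mem_range.mp hj; omega), Nat.cast_zero, zero_mul]
  rw [show d + N + i - (d + i) = N by omega,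
    show min (d + N) (d + i) + 1 = d + (min N i + 1) by omega,
    sum_range_add, sum_eq_zero hlow, zero_add, ringChoose_add_natCast]
  refine sum_congr rfl fun k hk ↦ ?_
  have hki : k ≤ i := by have := mem_range.mp hk; omega
  rw [Nat.add_sub_add_left, Nat.add_sub_add_left, Nat.choose_symm hki]

theorem gbinom_identity_two_general (y : R) {n i g : ℕ} (hig : i ≤ g) (hgn : g ≤ n + i) :
    (g.choose i : R) * Ring.choose (y + i) (n + i - g) =
      ∑ j ∈ range (min n g + 1),
        (ichoose j ((i : ℤ) + j - g) : R) * (g.choose (g - j) : R) * Ring.choose y (n - j) := by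
  rw [ringChoose_add_natCast_eq_sum_choose_sub y hig hgn, mul_sum]
  refine sum_congr rfl fun j hj ↦ ?_
  have hjg : j ≤ g := by have := mem_range.mp hj; omega
  rw [← mul_assoc, ← Nat.cast_mul, ← Nat.cast_mul, ichoose_mul_choose_sub i hjg]

end BinomialRing

/-- the combinatorial identity
`C(g,i) C(-x+i, n+i-g) = ∑_{j=0}^{min(n,g)} C(j, i+j-g) C(g, g-j) C(-x, n-j)`. -/
theorem gbinom_identity_two (x : ℝ) (n i g : ℕ) (h1 : i ≤ g) (h2 : g ≤ n + i) :
    (g.choose i : ℝ) * gbinom (-x + i) (n + i - g)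
    = ∑ j ∈ Finset.range (min n g + 1),
        (ichoose j ((i : ℤ) + j - g) : ℝ) * (g.choose (g - j) : ℝ) *
          gbinom (-x) (n - j) := by
  simp only [gbinom_eq_ringChoose]
  exact gbinom_identity_two_general (-x) h1 h2
end

section
/- For a real number u and a natural number k, define the polynomial r_k^u(x) = (-x)_k (x+u)_k / k!. Then for all natural numbers k, l with 0 \le l \le k, all real u and all real x: \Delta^l r_k^u(x) = (-1)^l \sum_{j=0}^{\lfloor l/2 \rfloor} \frac{(-1)^j}{j!} (l+1-2j)_{2j} \, (2x+u+l)_{l-2j} \, r^{u+l-j}_{k-l+j}(x). -/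
/-- The Pochhammer symbol `(y)_l = y (y+1) ⋯ (y+l-1)`. -/
noncomputable def poch (y : ℝ) (l : ℕ) : ℝ := ∏ k ∈ Finset.range l, (y + k)

/-- The forward difference operator `Δ f (x) = f (x+1) - f x`. -/
noncomputable def fdiff (g : ℝ → ℝ) : ℝ → ℝ := fun x => g (x + 1) - g x

/-- The polynomial `r_k^u(x) = (-x)_k (x+u)_k / k!`. -/
noncomputable def rpol (u : ℝ) (k : ℕ) (x : ℝ) : ℝ :=
  poch (-x) k * poch (x + u) k / k.factorial

/-!
One difference gives `Δ r_{k+1}^u = -(2x + u + 1) r_k^{u+1}`. The factor `2x + u + 1` has constant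
difference `2`, so the Leibniz rule for higher differences has only two terms and yields
`Δ^{n+2} r_{k+1}^u = -(2x + u + 2n + 3) Δ^{n+1} r_k^{u+1} - 2(n + 1) Δ^n r_k^{u+1}`.
The claimed expansion satisfies the same three-term recurrence, coefficient by coefficient, because
`(y)_d = (y + d - 1) (y)_{d-1}` and `(y)_d - (y - 1)_d = d (y)_{d-1}`.
-/

open Finset

section FwdDiff

variable {M R G : Type*} [AddCommMonoid M] [Ring R] [AddCommGroup G] [Module R G]

lemma fwdDiff_iter_succ_smul_of_fwdDiff_eq_const {h : M} {φ : M → R} {c : R}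
    (hφ : fwdDiff h φ = fun _ ↦ c) (f : M → G) (n : ℕ) (x : M) :
    (fwdDiff h)^[n + 1] (φ • f) x =
      (φ x + (n + 1) * c) • (fwdDiff h)^[n + 1] f x + ((n + 1) * c) • (fwdDiff h)^[n] f x := by
  have shift (y : M) : φ (y + h) = φ y + c := eq_add_of_sub_eq' (congrFun hφ y)
  induction n generalizing x with
  | zero =>
    simp only [zero_add, Function.iterate_one, Function.iterate_zero, id_eq, fwdDiff,
      Pi.smul_apply', shift, Nat.cast_zero, one_mul, add_smul, smul_sub]
    abel
  | succ n ih =>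
    have iter_shift (i : ℕ) :
        (fwdDiff h)^[i] f (x + h) = (fwdDiff h)^[i + 1] f x + (fwdDiff h)^[i] f x := by
      rw [Function.iterate_succ_apply', fwdDiff, sub_add_cancel]
    rw [Function.iterate_succ_apply', fwdDiff, ih, ih, shift, iter_shift, iter_shift]
    simp only [Nat.cast_add_one, add_mul, one_mul, add_smul, smul_add]
    abel

end FwdDiff

lemma poch_zero (y : ℝ) : poch y 0 = 1 := prod_range_zero _

lemma poch_succ (y : ℝ) (d : ℕ) : poch y (d + 1) = poch y d * (y + d) := prod_range_succ _ _

lemma poch_succ_left (y : ℝ) (d : ℕ) : poch y (d + 1) = y * poch (y + 1) d := by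
  simp only [poch, prod_range_succ', Nat.cast_add_one, Nat.cast_zero, add_zero, mul_comm y,
    add_assoc, add_comm (1 : ℝ)]

lemma poch_eq_ascPochhammer_eval (y : ℝ) (d : ℕ) : poch y d = (ascPochhammer ℝ d).eval y := by
  induction d with
  | zero => simp [poch_zero]
  | succ d ih => rw [poch_succ, ascPochhammer_succ_eval, ih]

lemma poch_add_one_sub_eq_descFactorial (n d : ℕ) :
    poch (n + 1 - d) d = n.descFactorial d := by
  rw [poch_eq_ascPochhammer_eval, add_sub_right_comm, ← descPochhammer_eval_eq_ascPochhammer,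
    descPochhammer_eval_eq_descFactorial]

lemma natCast_mul_poch (y : ℝ) (d : ℕ) : d * poch y d = d * (y + d - 1) * poch y (d - 1) := by
  cases d with
  | zero => simp
  | succ d =>
    rw [poch_succ, Nat.add_sub_cancel]
    push_cast
    ring

lemma poch_sub_poch_sub_one (y : ℝ) (d : ℕ) :
    poch y d - poch (y - 1) d = d * poch y (d - 1) := by
  cases d with
  | zero => simp [poch_zero]
  | succ d =>
    rw [poch_succ, poch_succ_left (y - 1), sub_add_cancel, Nat.add_sub_cancel]
    push_cast
    ring

lemma add_mul_poch (a y : ℝ) (d : ℕ) :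
    (d + a) * poch y d = (y + d + a - 1) * (d * poch y (d - 1)) + a * poch (y - 1) d := by
  linear_combination natCast_mul_poch y d + a * poch_sub_poch_sub_one y d

lemma fdiff_rpol_succ (u : ℝ) (k : ℕ) :
    fdiff (rpol u (k + 1)) = -((fun x ↦ 2 * x + u + 1) * rpol (u + 1) k) := by
  funext x
  have hneg : poch (-(x + 1)) (k + 1) = -(x + 1) * poch (-x) k := by
    rw [poch_succ_left, neg_add_rev, neg_add_cancel_comm]
  have hpos : poch (x + u) (k + 1) = (x + u) * poch (x + (u + 1)) k := by
    rw [poch_succ_left, add_assoc]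
  have hshift : x + 1 + u = x + (u + 1) := by ring
  simp only [fdiff, rpol, Pi.neg_apply, Pi.mul_apply]
  rw [hneg, hpos, hshift, poch_succ (-x), poch_succ (x + (u + 1)), Nat.factorial_succ]
  push_cast
  field_simp
  ring

lemma fdiff_eq_fwdDiff : fdiff = fwdDiff (1 : ℝ) := rfl

lemma fdiff_iter_add_two_rpol_succ (u : ℝ) (k n : ℕ) (x : ℝ) :
    fdiff^[n + 2] (rpol u (k + 1)) x =
      -((2 * x + u + 2 * n + 3) * fdiff^[n + 1] (rpol (u + 1) k) x +
        2 * (n + 1) * fdiff^[n] (rpol (u + 1) k) x) := by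
  have hφ : fwdDiff (1 : ℝ) (fun x ↦ 2 * x + u + 1) = fun _ ↦ 2 := by
    funext x
    simp only [fwdDiff]
    ring
  rw [Function.iterate_succ_apply, fdiff_rpol_succ, fdiff_eq_fwdDiff, ← neg_one_smul ℝ,
    fwdDiff_iter_const_smul, Pi.smul_apply, ← smul_eq_mul,
    fwdDiff_iter_succ_smul_of_fwdDiff_eq_const hφ]
  simp only [smul_eq_mul]
  ring

/-- The coefficient of `r^{u+l-j}_{k-l+j}(x)` in the expansion of `(-1)^l Δ^l r_k^u(x)`, as a
function of `y = 2x + u`. The factor `(l+1-2j)_{2j}` is written as the falling factorial of `l`, so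
that the coefficient visibly vanishes for `l < 2j`. -/
noncomputable def rpolCoeff (l j : ℕ) (y : ℝ) : ℝ :=
  (-1) ^ j / j.factorial * l.descFactorial (2 * j) * poch (y + l) (l - 2 * j)

lemma rpolCoeff_eq_zero_of_lt {l j : ℕ} (h : l < 2 * j) (y : ℝ) : rpolCoeff l j y = 0 := by
  simp [rpolCoeff, Nat.descFactorial_of_lt h]

lemma rpolCoeff_zero_right (l : ℕ) (y : ℝ) : rpolCoeff l 0 y = poch (y + l) l := by
  simp [rpolCoeff]

lemma rpolCoeff_succ_zero (l : ℕ) (y : ℝ) :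
    rpolCoeff (l + 1) 0 y = (y + 2 * l + 1) * rpolCoeff l 0 (y + 1) := by
  have hshift : y + (l + 1 : ℕ) = y + 1 + l := by push_cast; ring
  rw [rpolCoeff_zero_right, rpolCoeff_zero_right, hshift, poch_succ]
  ring

lemma rpolCoeff_succ_succ (n j : ℕ) (y : ℝ) :
    rpolCoeff (n + 1) (j + 1) y =
      (-1) ^ (j + 1) / (j + 1).factorial *
        ((n + 1) * ((n - 2 * j : ℕ) * n.descFactorial (2 * j))) *
          poch (y + n + 1) (n - 2 * j - 1) := by
  rw [rpolCoeff, show 2 * (j + 1) = 2 * j + 1 + 1 by ring, Nat.succ_descFactorial_succ,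
    Nat.descFactorial_succ, show n + 1 - (2 * j + 1 + 1) = n - 2 * j - 1 by lia]
  push_cast
  rw [add_assoc y]

lemma rpolCoeff_add_two_succ (n j : ℕ) (y : ℝ) :
    rpolCoeff (n + 2) (j + 1) y =
      (-1) ^ (j + 1) / (j + 1).factorial * ((n + 2) * ((n + 1) * n.descFactorial (2 * j))) *
        poch (y + n + 2) (n - 2 * j) := by
  rw [rpolCoeff, show 2 * (j + 1) = 2 * j + 1 + 1 by ring, Nat.succ_descFactorial_succ,
    Nat.succ_descFactorial_succ, show n + 2 - (2 * j + 1 + 1) = n - 2 * j by lia]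
  push_cast
  rw [add_assoc y, add_assoc (n : ℝ), one_add_one_eq_two]

lemma rpolCoeff_add_two_succ_eq_sub (n j : ℕ) (y : ℝ) :
    rpolCoeff (n + 2) (j + 1) y =
      (y + 2 * n + 3) * rpolCoeff (n + 1) (j + 1) (y + 1) -
        2 * (n + 1) * rpolCoeff n j (y + 1) := by
  rcases lt_or_ge n (2 * j) with h | h
  · simp only [rpolCoeff_eq_zero_of_lt h, rpolCoeff_eq_zero_of_lt (show n + 1 < 2 * (j + 1) by lia),
      rpolCoeff_eq_zero_of_lt (show n + 2 < 2 * (j + 1) by lia), mul_zero, sub_zero]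
  have hshift₁ : y + 1 + n + 1 = y + n + 2 := by ring
  have hshift₀ : y + 1 + n = y + n + 2 - 1 := by ring
  have hsign : (-1 : ℝ) ^ j / j.factorial =
      -((j + 1) * ((-1) ^ (j + 1) / (j + 1).factorial)) := by
    rw [Nat.factorial_succ, pow_succ]
    push_cast
    field_simp
  rw [rpolCoeff_add_two_succ, rpolCoeff_succ_succ, rpolCoeff, hshift₁, hshift₀, hsign]
  obtain ⟨d, rfl⟩ := Nat.exists_eq_add_of_le' h
  rw [Nat.add_sub_cancel]
  have hpoch := add_mul_poch (2 * j + 2) (y + (d + 2 * j : ℕ) + 2) d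
  push_cast at hpoch ⊢
  linear_combination ((-1) ^ (j + 1) / (j + 1).factorial * (d + 2 * j + 1) *
    (d + 2 * j).descFactorial (2 * j)) * hpoch

/-- The expansion of `(-1)^l Δ^l r_{m+l}^u(x)`, summed over `j ≤ N`; all terms with `2j > l` vanish,
so that `N` may be any number with `l ≤ 2N + 1`. -/
noncomputable def rpolExpansion (N l m : ℕ) (u x : ℝ) : ℝ :=
  ∑ j ∈ range (N + 1), rpolCoeff l j (2 * x + u) * rpol (u + l - j) (m + j) x

lemma rpolExpansion_of_le_one {l : ℕ} (hl : l ≤ 1) (N m : ℕ) (u x : ℝ) :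
    rpolExpansion N l m u x = poch (2 * x + u + l) l * rpol (u + l) m x := by
  have tail (j : ℕ) : rpolCoeff l (j + 1) (2 * x + u) = 0 :=
    rpolCoeff_eq_zero_of_lt (by lia) _
  simp [rpolExpansion, sum_range_succ', tail, rpolCoeff_zero_right]

lemma rpolExpansion_succ_add_two (N n m : ℕ) (u x : ℝ) :
    rpolExpansion (N + 1) (n + 2) m u x =
      (2 * x + u + 2 * n + 3) * rpolExpansion (N + 1) (n + 1) m (u + 1) x -
        2 * (n + 1) * rpolExpansion N n (m + 1) (u + 1) x := by
  have hy : 2 * x + (u + 1) = 2 * x + u + 1 := by ring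
  have hu (j : ℕ) : u + (n + 2 : ℕ) - j = u + 1 + (n + 1 : ℕ) - j := by push_cast; ring
  have hu' (j : ℕ) : u + 1 + (n + 1 : ℕ) - (j + 1 : ℕ) = u + 1 + n - j := by push_cast; ring
  have hm (j : ℕ) : m + 1 + j = m + (j + 1) := by ring
  have head : rpolCoeff (n + 2) 0 (2 * x + u) =
      (2 * x + u + 2 * n + 3) * rpolCoeff (n + 1) 0 (2 * x + u + 1) := by
    rw [rpolCoeff_succ_zero]
    push_cast
    ring
  simp only [rpolExpansion, hy, hu, hm]
  rw [sum_range_succ', sum_range_succ' _ (N + 1), head]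
  simp only [rpolCoeff_add_two_succ_eq_sub, hu', sub_mul, sum_sub_distrib, mul_assoc, ← mul_sum]
  ring

lemma fdiff_iter_rpol_add_eq_rpolExpansion (l m : ℕ) {N : ℕ} (hN : l ≤ 2 * N + 1) (u x : ℝ) :
    fdiff^[l] (rpol u (m + l)) x = (-1) ^ l * rpolExpansion N l m u x := by
  induction l using Nat.twoStepInduction generalizing N m u with
  | zero => simp [rpolExpansion_of_le_one, poch_zero]
  | one => simp [rpolExpansion_of_le_one, fdiff_rpol_succ, poch_succ, poch_zero]
  | more n ih₀ ih₁ =>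
    obtain ⟨N, rfl⟩ := Nat.exists_eq_add_of_le' (show 1 ≤ N by lia)
    have h₀ := ih₀ (m + 1) (N := N) (by lia) (u + 1)
    have h₁ := ih₁ m (N := N + 1) (by lia) (u + 1)
    rw [add_right_comm, add_assoc] at h₀
    rw [show m + (n + 2) = m + (n + 1) + 1 from rfl, fdiff_iter_add_two_rpol_succ, h₁, h₀,
      rpolExpansion_succ_add_two]
    ring

/-- the expansion of `Δ^l r_k^u` in terms of the polynomials
`r^{u+l-j}_{k-l+j}`. -/
theorem fdiff_iter_rpol (k l : ℕ) (hlk : l ≤ k) (u x : ℝ) :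
    fdiff^[l] (rpol u k) x
    = (-1 : ℝ) ^ l * ∑ j ∈ Finset.range (l / 2 + 1),
        ((-1 : ℝ) ^ j / j.factorial) * poch ((l : ℝ) + 1 - 2 * j) (2 * j) *
          poch (2 * x + u + l) (l - 2 * j) * rpol (u + l - j) (k - l + j) x := by
  obtain ⟨m, rfl⟩ := Nat.exists_eq_add_of_le' hlk
  have hpoch (j : ℕ) : poch ((l : ℝ) + 1 - 2 * j) (2 * j) = l.descFactorial (2 * j) := by
    exact_mod_cast poch_add_one_sub_eq_descFactorial l (2 * j)
  simp only [hpoch, Nat.add_sub_cancel]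
  exact fdiff_iter_rpol_add_eq_rpolExpansion l m (by lia) u x
end
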